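/- arXiv:1308.0429 — 3 statements merged into one kernel-verified Lean document; each statement's English description precedes it below -/
import Mathlib

section
/- Let A be a separable C*-algebra such that every element of A is a norm limit of invertible elements of the unitization Ã. Let G be a finite group and let α and β be actions of G on A. Assume: (1) for every g ∈ G, the automorphisms α_g and β_g are approximately unitarily equivalent, i.e. for every finite set F₁ ⊆ A and δ > 0 there is a unitary u in the multiplier algebra M(A) with ‖u·β_g(y)·u* − α_g(y)‖ < δ for all y ∈ F₁; and (2) α admits Rohlin sequences: for each g ∈ G there is a sequence (f_{g,n})_{n∈ℕ} of positive contractions in A such that for all a ∈ A and all g, h ∈ G one has lim_n ‖f_{g,n}·a − a·f_{g,n}‖ = 0, lim_n ‖f_{g,n}·f_{h,n}·a‖ = 0 whenever g ≠ h, lim_n ‖(f_{g,n}² − f_{g,n})·a‖ = 0, lim_n ‖(Σ_{k∈G} f_{k,n})·a − a‖ = 0, and lim_n ‖(α_g(f_{h,n}) − f_{gh,n})·a‖ = 0. Then for every finite set F ⊆ A and every ε > 0 there exists a unitary element v of Ã such that for every x ∈ F: ‖β_g(x) − v*·α_g(v·x·v*)·v‖ < ε for all g ∈ G, and ‖v·x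 − x·v‖ < ε + sup_{g∈G} ‖β_g(x) − α_g(x)‖. (Lemma 3.4 of the paper, with the Rohlin property of α expressed by representative sequences of the Rohlin projections in the central sequence algebra F(A), and with the consequence of 'almost stable rank one' that is used in the proof, namely A ⊆ closure(GL(Ã)), taken as hypothesis.) -/
open scoped MultiplierAlgebra
open Filter Topology

/-!
A Rohlin family `f` turns the maps `α_h ∘ β_{h⁻¹}` into a single approximately multiplicative map
`T x = ∑ h, f_h α_h(β_{h⁻¹} x)`. Reindexing the sum gives `α_g ∘ T ≈ T ∘ β_g`, and since the `f_h`
behave like orthogonal central projections of sum one, `T x` is at most `sup_g ‖β_g x - α_g x‖`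
away from `x`, up to a small error. Each `α_h ∘ β_{h⁻¹}` is close to conjugation by a multiplier
unitary `u_h`, so `T` is close to conjugation by `w = ∑ h, f_h u_h ∈ A`, which is almost an isometry
on any given finite set. As `w` is a limit of invertible elements of `Ã`, polar decomposition of a
nearby invertible element replaces `w` by a unitary `v` of `Ã`. Then `v x v* ≈ T x`, and conjugation
by `v` almost intertwines `β` with `α`.
-/

section Polar

variable {B : Type*} [CStarAlgebra B]

theorem norm_sub_one_mul_le [PartialOrder B] [StarOrderedRing B] {r : B} (hr : 0 ≤ r) (y : B) :
    ‖(r - 1) * y‖ ≤ ‖(r * r - 1) * y‖ := by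
  have one_le : 1 ≤ r + 1 := le_add_of_nonneg_left hr
  obtain ⟨s, hs⟩ := CStarAlgebra.isUnit_of_le 1 one_le
  have one_le_s : (1 : B) ≤ s := hs ▸ one_le
  have norm_inv_le : ‖(↑s⁻¹ : B)‖ ≤ 1 :=
    (CStarAlgebra.norm_le_one_iff_of_nonneg _
      (CFC.inv_nonneg_of_nonneg s (zero_le_one.trans one_le_s))).2
      (CStarAlgebra.inv_le_one one_le_s)
  have factor : (r - 1) * y = ↑s⁻¹ * ((r * r - 1) * y) := by
    rw [Units.eq_inv_mul_iff_mul_eq, hs]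
    noncomm_ring
  calc ‖(r - 1) * y‖ ≤ ‖(↑s⁻¹ : B)‖ * ‖(r * r - 1) * y‖ := factor ▸ norm_mul_le _ _
    _ ≤ ‖(r * r - 1) * y‖ := mul_le_of_le_one_left (norm_nonneg _) norm_inv_le

theorem exists_unitary_mul_abs_eq {z : B} (hz : IsUnit z) [PartialOrder B] [StarOrderedRing B] :
    ∃ v ∈ unitary B, v * CFC.abs z = z := by
  obtain ⟨r, hr⟩ : IsUnit (CFC.abs z) := by
    have : IsUnit (CFC.abs z * CFC.abs z) := CFC.abs_mul_abs z ▸ hz.star.mul hz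
    exact ((Commute.refl _).isUnit_mul_iff.1 this).1
  have star_inv : star (↑r⁻¹ : B) = ↑r⁻¹ := by
    have : star r = r := Units.ext (by simpa [hr] using (CFC.abs_nonneg z).isSelfAdjoint.star_eq)
    rw [← Units.coe_star_inv, this]
  have star_mul_self : star (z * ↑r⁻¹) * (z * ↑r⁻¹) = 1 := by
    rw [star_mul, star_inv, mul_assoc, ← mul_assoc (star z), ← CFC.abs_mul_abs z, ← hr]
    simp only [Units.mul_inv_cancel_right, Units.inv_mul]
  have mul_star_self : (z * ↑r⁻¹) * star (z * ↑r⁻¹) = 1 :=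
    (hz.mul r⁻¹.isUnit).mul_right_cancel (by rw [mul_assoc, star_mul_self, mul_one, one_mul])
  exact ⟨z * ↑r⁻¹, Unitary.mem_iff.2 ⟨star_mul_self, mul_star_self⟩,
    by rw [← hr, Units.inv_mul_cancel_right]⟩

theorem exists_unitary_norm_sub_mul_le {z : B} (hz : IsUnit z) :
    ∃ v ∈ unitary B, ∀ y : B, ‖(v - z) * y‖ ≤ ‖(star z * z - 1) * y‖ := by
  let _ := CStarAlgebra.spectralOrder B
  let _ := CStarAlgebra.spectralOrderedRing B
  obtain ⟨v, hv, hvz⟩ := exists_unitary_mul_abs_eq hz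
  refine ⟨v, hv, fun y => ?_⟩
  calc ‖(v - z) * y‖ = ‖v * ((CFC.abs z - 1) * y)‖ := by
        rw [← norm_neg, ← mul_assoc, mul_sub, hvz, mul_one, ← neg_mul, neg_sub]
    _ = ‖(CFC.abs z - 1) * y‖ := CStarRing.norm_mem_unitary_mul _ hv
    _ ≤ ‖(star z * z - 1) * y‖ :=
        CFC.abs_mul_abs z ▸ norm_sub_one_mul_le (CFC.abs_nonneg z) y

theorem exists_unitary_norm_sub_mul_lt {w : B} (hw : w ∈ closure {z : B | IsUnit z})
    (E : Finset B) {δ : ℝ} (hE : ∀ y ∈ E, ‖(star w * w - 1) * y‖ < δ) :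
    ∃ v ∈ unitary B, ∀ y ∈ E, ‖(v - w) * y‖ < δ := by
  have near : ∀ᶠ z in 𝓝 w, ∀ y ∈ E, ‖(star z * z - 1) * y‖ + ‖(z - w) * y‖ < δ := by
    refine (eventually_all_finset E).2 fun y hy => ?_
    have cont : Continuous fun z => ‖(star z * z - 1) * y‖ + ‖(z - w) * y‖ := by fun_prop
    exact cont.continuousAt.eventually_lt_const (by simpa using hE y hy)
  obtain ⟨z, hz, hzE⟩ := ((mem_closure_iff_frequently.1 hw).and_eventually near).exists
  obtain ⟨v, hv, hvz⟩ := exists_unitary_norm_sub_mul_le hz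
  refine ⟨v, hv, fun y hy => ?_⟩
  calc ‖(v - w) * y‖ = ‖(v - z) * y + (z - w) * y‖ := by noncomm_ring
    _ ≤ ‖(star z * z - 1) * y‖ + ‖(z - w) * y‖ := norm_add_le_of_le (hvz y) le_rfl
    _ < δ := hzE y hy

theorem norm_conj_sub_conj_le {v w y : B} (hv : v ∈ unitary B) {θ C : ℝ} (hw : ‖w‖ ≤ C)
    (hy : ‖(v - w) * y‖ ≤ θ) (hy' : ‖(v - w) * star y‖ ≤ θ) :
    ‖v * y * star v - w * y * star w‖ ≤ (C + 1) * θ := by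
  have split : v * y * star v - w * y * star w =
      v * star ((v - w) * star y) + (v - w) * y * star w := by
    simp only [star_mul, star_sub, star_star]
    noncomm_ring
  have left : ‖v * star ((v - w) * star y)‖ ≤ θ := by
    rwa [CStarRing.norm_mem_unitary_mul _ hv, norm_star]
  have right : ‖(v - w) * y * star w‖ ≤ θ * C :=
    norm_mul_le_of_le hy (by rwa [norm_star])
  calc ‖v * y * star v - w * y * star w‖ ≤ θ + θ * C := split ▸ norm_add_le_of_le left right
    _ = (C + 1) * θ := by ring

theorem eventually_exists_unitary_norm_conj_sub_lt {κ : Type*} {l : Filter κ} {w : κ → B}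
    (hw : ∀ n, w n ∈ closure {z : B | IsUnit z}) {C : ℝ} (hC : ∀ n, ‖w n‖ ≤ C) (E : Finset B)
    (hE : ∀ y ∈ E, Tendsto (fun n => (star (w n) * w n - 1) * y) l (𝓝 0))
    (hE' : ∀ y ∈ E, Tendsto (fun n => (star (w n) * w n - 1) * star y) l (𝓝 0))
    {δ : ℝ} (hδ : 0 < δ) :
    ∀ᶠ n in l, ∃ v ∈ unitary B, ∀ y ∈ E, ‖v * y * star v - w n * y * star (w n)‖ < δ := by
  classical
  obtain ⟨θ, hθ, hθδ⟩ : ∃ θ > 0, (C + 1) * θ < δ := exists_pos_mul_lt hδ _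
  have iso : ∀ᶠ n in l, ∀ y ∈ E ∪ E.image star, ‖(star (w n) * w n - 1) * y‖ < θ := by
    refine (eventually_all_finset _).2 fun y hy => Tendsto.eventually_lt_const
      (by simpa using hθ) (Tendsto.norm (a := 0) ?_)
    rcases Finset.mem_union.1 hy with hy | hy
    · exact hE y hy
    · obtain ⟨x, hx, rfl⟩ := Finset.mem_image.1 hy
      exact hE' x hx
  filter_upwards [iso] with n hn
  obtain ⟨v, hv, hvw⟩ := exists_unitary_norm_sub_mul_lt (hw n) _ hn
  refine ⟨v, hv, fun y hy => (norm_conj_sub_conj_le hv (hC n) ?_ ?_).trans_lt hθδ⟩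
  · exact (hvw y (Finset.mem_union_left _ hy)).le
  · exact (hvw _ (Finset.mem_union_right _ (Finset.mem_image_of_mem star hy))).le

theorem norm_sub_star_mul_mul_of_mem_unitary {v : B} (hv : v ∈ unitary B) (x z : B) :
    ‖x - star v * z * v‖ = ‖v * x * star v - z‖ := by
  have : x - star v * z * v = star v * (v * x * star v - z) * v := by
    simp only [mul_sub, sub_mul, mul_assoc, Unitary.star_mul_self_of_mem hv, mul_one,
      ← mul_assoc (star v) v, one_mul]
  rw [this, CStarRing.norm_mul_mem_unitary _ hv,
    CStarRing.norm_mem_unitary_mul _ (Unitary.star_mem hv)]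

theorem norm_mul_sub_mul_of_mem_unitary {v : B} (hv : v ∈ unitary B) (x : B) :
    ‖v * x - x * v‖ = ‖v * x * star v - x‖ := by
  rw [← CStarRing.norm_mul_mem_unitary (v * x * star v - x) hv, sub_mul, mul_assoc _ (star v),
    Unitary.star_mul_self_of_mem hv, mul_one]

end Polar

/-- The C⋆-identity makes any bounded function satisfying half of it contractive: iterating gives
`p b ^ 2 ^ m ≤ C * ‖b‖ ^ 2 ^ m` for all `m`. -/
theorem le_norm_of_sq_le_star_mul_self {B : Type*} [NonUnitalNormedRing B] [StarRing B]
    [CStarRing B] {p : B → ℝ} {C : ℝ} (hsq : ∀ b, p b ^ 2 ≤ p (star b * b))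
    (hC : ∀ b, p b ≤ C * ‖b‖) (b : B) : p b ≤ ‖b‖ := by
  have pow_le (m : ℕ) : ∀ b, p b ^ 2 ^ m ≤ C * ‖b‖ ^ 2 ^ m := by
    induction m with
    | zero => simpa using hC
    | succ m ih =>
      intro b
      calc p b ^ 2 ^ (m + 1) = (p b ^ 2) ^ 2 ^ m := by rw [← pow_mul, pow_succ']
        _ ≤ p (star b * b) ^ 2 ^ m := by gcongr; exact hsq b
        _ ≤ C * ‖star b * b‖ ^ 2 ^ m := ih _
        _ = C * ‖b‖ ^ 2 ^ (m + 1) := by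
          rw [CStarRing.norm_star_mul_self, ← sq, ← pow_mul, pow_succ']
  by_contra! hlt
  have hp : 0 < p b := (norm_nonneg b).trans_lt hlt
  have lim : Tendsto (fun m : ℕ => C * (‖b‖ / p b) ^ 2 ^ m) atTop (𝓝 (C * 0)) :=
    ((tendsto_pow_atTop_nhds_zero_of_lt_one (by positivity) ((div_lt_one hp).2 hlt)).comp
      (tendsto_pow_atTop_atTop_of_one_lt one_lt_two)).const_mul C
  obtain ⟨m, hm⟩ := (lim.eventually_lt_const (by simp : C * 0 < 1)).exists
  rw [div_pow, ← mul_div_assoc, div_lt_one (by positivity)] at hm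
  exact hm.not_ge (pow_le m b)

section Multiplier

variable {A : Type*} [NonUnitalCStarAlgebra A]

theorem multiplier_fst_mul (u : 𝓜(ℂ, A)) (a b : A) : u.fst (a * b) = u.fst a * b := by
  have mul_eq_zero (c : A) : c * (u.fst (a * b) - u.fst a * b) = 0 := by
    rw [mul_sub, ← u.central, ← mul_assoc, ← mul_assoc, u.central, sub_self]
  exact sub_eq_zero.1 ((CStarRing.star_mul_self_eq_zero_iff _).1 (mul_eq_zero _))

theorem star_multiplier_snd_mul (u : 𝓜(ℂ, A)) (a b : A) :
    star (u.snd a) * b = (star u).fst (star a * b) := by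
  rw [multiplier_fst_mul, DoubleCentralizer.star_fst, star_star]

theorem star_fst_fst_of_mem_unitary {u : 𝓜(ℂ, A)} (hu : u ∈ unitary 𝓜(ℂ, A)) (a : A) :
    (star u).fst (u.fst a) = a := by
  have h := congrArg (fun m : 𝓜(ℂ, A) => m.fst a) (Unitary.star_mul_self_of_mem hu)
  simpa only [DoubleCentralizer.mul_fst, DoubleCentralizer.one_fst,
    mul_apply_eq_comp, one_apply_eq_self] using h

theorem norm_snd_le_of_mem_unitary {u : 𝓜(ℂ, A)} (hu : u ∈ unitary 𝓜(ℂ, A)) (a : A) :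
    ‖u.snd a‖ ≤ ‖a‖ := by
  have norm_le_one : ‖u‖ ≤ 1 := by
    nontriviality 𝓜(ℂ, A)
    exact (CStarRing.norm_of_mem_unitary hu).le
  calc ‖u.snd a‖ ≤ ‖u.snd‖ * ‖a‖ := u.snd.le_opNorm a
    _ ≤ ‖a‖ := mul_le_of_le_one_left (norm_nonneg a) (by rwa [DoubleCentralizer.norm_snd])

/-- The map `φ` is pointwise approximated, on finite sets, by conjugations with unitary
multipliers; `(star u).snd (u.fst a)` is `u a u*`. -/
def IsApproxInner (φ : A → A) : Prop :=
  ∀ (F : Finset A) (δ : ℝ), 0 < δ →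
    ∃ u ∈ unitary 𝓜(ℂ, A), ∀ a ∈ F, ‖(star u).snd (u.fst a) - φ a‖ < δ

/-- Approximate unitary equivalence of two automorphisms, with the unitaries taken in the
multiplier algebra: `u ψ(a) u*` is close to `φ a` on any given finite set. -/
def IsApproxUnitarilyEquiv (φ ψ : A ≃⋆ₐ[ℂ] A) : Prop :=
  ∀ (F : Finset A) (δ : ℝ), 0 < δ →
    ∃ u ∈ unitary 𝓜(ℂ, A), ∀ a ∈ F, ‖(star u).snd (u.fst (ψ a)) - φ a‖ < δ

theorem IsApproxUnitarilyEquiv.isApproxInner_comp_inv {φ ψ : A ≃⋆ₐ[ℂ] A}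
    (h : IsApproxUnitarilyEquiv φ ψ) : IsApproxInner fun a => φ (ψ⁻¹ a) := by
  classical
  intro F δ hδ
  obtain ⟨u, hu, huF⟩ := h (F.image ⇑ψ⁻¹) δ hδ
  refine ⟨u, hu, fun a ha => ?_⟩
  simpa only [← StarAlgEquiv.mul_apply, mul_inv_cancel, StarAlgEquiv.one_apply] using
    huF _ (Finset.mem_image_of_mem _ ha)

end Multiplier

/-- Asymptotic equality of two nets: their difference tends to zero. -/
def AsympEq {κ E : Type*} [SeminormedAddCommGroup E] (l : Filter κ) (x y : κ → E) : Prop :=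
  Tendsto (fun n => x n - y n) l (𝓝 0)

namespace AsympEq

variable {κ : Type*} {l : Filter κ}

section Group

variable {E E' : Type*} [SeminormedAddCommGroup E] [SeminormedAddCommGroup E'] {x y z : κ → E}

theorem of_eq (h : ∀ n, x n = y n) : AsympEq l x y := by
  simp only [AsympEq, h, sub_self, tendsto_const_nhds]

theorem symm (h : AsympEq l x y) : AsympEq l y x := by
  simpa [AsympEq] using h.neg

theorem trans (hxy : AsympEq l x y) (hyz : AsympEq l y z) : AsympEq l x z := by
  simpa [AsympEq] using Tendsto.add hxy hyz

instance : Trans (AsympEq (E := E) l) (AsympEq l) (AsympEq l) := ⟨trans⟩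

theorem sum {ι : Type*} {s : Finset ι} {x y : ι → κ → E} (h : ∀ i ∈ s, AsympEq l (x i) (y i)) :
    AsympEq l (fun n => ∑ i ∈ s, x i n) fun n => ∑ i ∈ s, y i n := by
  simpa [AsympEq] using tendsto_finsetSum s h

theorem map {F : Type*} [FunLike F E E'] [AddMonoidHomClass F E E'] (h : AsympEq l x y) (φ : F)
    (hφ : Continuous φ) : AsympEq l (fun n => φ (x n)) fun n => φ (y n) := by
  simpa [AsympEq, Function.comp_def] using (hφ.tendsto 0).comp h

theorem eventually_norm_lt (h : AsympEq l x y) {J K : ℝ} (hJK : J < K)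
    (hy : ∀ᶠ n in l, ‖y n‖ < J) : ∀ᶠ n in l, ‖x n‖ < K := by
  have close : ∀ᶠ n in l, ‖x n - y n‖ < K - J :=
    (Tendsto.norm h).eventually_lt_const (by simpa using hJK)
  filter_upwards [close, hy] with n hn hyn
  linarith [norm_sub_norm_le (x n) (y n)]

theorem eventually_norm_sub_lt (h : AsympEq l x y) {δ : ℝ} (hδ : 0 < δ) :
    ∀ᶠ n in l, ‖x n - y n‖ < δ :=
  (Tendsto.norm h).eventually_lt_const (by simpa using hδ)

end Group

section Ring

variable {R : Type*} [NonUnitalSeminormedRing R] {x y : κ → R}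

theorem bdd_mul (h : AsympEq l x y) {c : κ → R} {C : ℝ} (hc : ∀ n, ‖c n‖ ≤ C) :
    AsympEq l (fun n => c n * x n) fun n => c n * y n := by
  refine squeeze_zero_norm (a := fun n => C * ‖x n - y n‖) (fun n => ?_) ?_
  · rw [← mul_sub]
    exact norm_mul_le_of_le (hc n) le_rfl
  · simpa using (Tendsto.norm h).const_mul C

theorem const_mul (h : AsympEq l x y) (a : R) : AsympEq l (fun n => a * x n) fun n => a * y n :=
  h.bdd_mul fun _ => le_rfl

theorem mul_const (h : AsympEq l x y) (a : R) : AsympEq l (fun n => x n * a) fun n => y n * a := by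
  simpa [AsympEq, sub_mul] using Tendsto.mul_const a h

end Ring

end AsympEq

/-- Nets of self-adjoint contractions `f i` that represent mutually orthogonal projections with
sum one in the central sequence algebra `F(A)`. Elements of `F(A)` are taken modulo the annihilator
of `A`, so that all relations but centrality only hold after multiplication with elements of `A`. -/
structure IsCentralPartition {A : Type*} [NonUnitalCStarAlgebra A] {ι κ : Type*} [Fintype ι]
    (l : Filter κ) (f : ι → κ → A) : Prop where
  isSelfAdjoint : ∀ i n, IsSelfAdjoint (f i n)
  norm_le_one : ∀ i n, ‖f i n‖ ≤ 1
  central : ∀ a i, Tendsto (fun n => ‖f i n * a - a * f i n‖) l (𝓝 0)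
  orthogonal : ∀ a i j, i ≠ j → Tendsto (fun n => ‖f i n * f j n * a‖) l (𝓝 0)
  idempotent : ∀ a i, Tendsto (fun n => ‖(f i n * f i n - f i n) * a‖) l (𝓝 0)
  sum_eq_one : ∀ a, Tendsto (fun n => ‖(∑ i, f i n) * a - a‖) l (𝓝 0)

/-- The element `∑ i, f i * u i` of `A` obtained by gluing multipliers `u i` along a partition. -/
noncomputable def glue {A : Type*} [NonUnitalCStarAlgebra A] {ι κ : Type*} [Fintype ι]
    (f : ι → κ → A) (u : ι → 𝓜(ℂ, A)) (n : κ) : A :=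
  ∑ i, (u i).snd (f i n)

namespace IsCentralPartition

variable {A : Type*} [NonUnitalCStarAlgebra A] {ι κ : Type*} [Fintype ι] {l : Filter κ}
  {f : ι → κ → A}

theorem asympEq_comm (hf : IsCentralPartition l f) (a : A) (i : ι) :
    AsympEq l (fun n => f i n * a) fun n => a * f i n :=
  tendsto_zero_iff_norm_tendsto_zero.2 (hf.central a i)

theorem asympEq_sum_mul (hf : IsCentralPartition l f) (a : A) :
    AsympEq l (fun n => ∑ i, f i n * a) fun _ => a :=
  tendsto_zero_iff_norm_tendsto_zero.2 (by simpa only [Finset.sum_mul] using hf.sum_eq_one a)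

theorem asympEq_mul_sum (hf : IsCentralPartition l f) (b : ι → A) (i : ι) :
    AsympEq l (fun n => f i n * ∑ j, f j n * b j) fun n => f i n * b i := by
  classical
  have mul_mul (j : ι) :
      AsympEq l (fun n => f i n * (f j n * b j)) fun n => if i = j then f i n * b i else 0 := by
    refine tendsto_zero_iff_norm_tendsto_zero.2 ?_
    rcases eq_or_ne i j with rfl | hij
    · simpa [sub_mul, mul_assoc] using hf.idempotent (b i) i
    · simpa [hij, mul_assoc] using hf.orthogonal (b j) i j hij
  simpa [Finset.mul_sum] using AsympEq.sum (s := Finset.univ) fun j _ => mul_mul j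

theorem asympEq_star_sum_mul_sum (hf : IsCentralPartition l f) (c : ι → A) :
    AsympEq l (fun n => star (∑ i, f i n * c i) * ∑ i, f i n * c i)
      fun n => ∑ i, f i n * (star (c i) * c i) := by
  calc (fun n => star (∑ i, f i n * c i) * ∑ i, f i n * c i)
    AsympEq l _ fun n => ∑ i, star (c i) * (f i n * ∑ j, f j n * c j) := .of_eq fun n => by
        simp only [star_sum, star_mul, (hf.isSelfAdjoint _ n).star_eq, Finset.sum_mul, mul_assoc]
    AsympEq l _ fun n => ∑ i, star (c i) * (f i n * c i) :=
        .sum fun i _ => (hf.asympEq_mul_sum c i).const_mul _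
    AsympEq l _ fun n => ∑ i, f i n * (star (c i) * c i) := .sum fun i _ => by
        simpa only [mul_assoc] using (hf.asympEq_comm (star (c i)) i).symm.mul_const (c i)

theorem norm_sum_mul_le (hf : IsCentralPartition l f) (c : ι → A) (n : κ) :
    ‖∑ i, f i n * c i‖ ≤ Fintype.card ι * ‖c‖ :=
  calc ‖∑ i, f i n * c i‖ ≤ ∑ _i : ι, ‖c‖ := norm_sum_le_of_le _ fun i _ =>
        (norm_mul_le_of_le (hf.norm_le_one i n) (norm_le_pi_norm c i)).trans_eq (one_mul _)
    _ = Fintype.card ι * ‖c‖ := by simp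

theorem sq_limsup_norm_sum_mul_le [l.NeBot] (hf : IsCentralPartition l f) (c : ι → A) :
    limsup (fun n => ‖∑ i, f i n * c i‖) l ^ 2 ≤
      limsup (fun n => ‖∑ i, f i n * (star (c i) * c i)‖) l := by
  have bdd (b : ι → A) : l.IsBoundedUnder (· ≤ ·) fun n => ‖∑ i, f i n * b i‖ :=
    isBoundedUnder_of ⟨_, hf.norm_sum_mul_le b⟩
  have nonneg (b : ι → A) : 0 ≤ limsup (fun n => ‖∑ i, f i n * b i‖) l :=
    le_limsup_of_frequently_le (Eventually.of_forall fun n => norm_nonneg _).frequently (bdd b)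
  refine le_of_forall_gt_imp_ge_of_dense fun K hK => ?_
  obtain ⟨J, hJ, hJK⟩ := exists_between hK
  have norm_le_sqrt : ∀ᶠ n in l, ‖∑ i, f i n * c i‖ ≤ √K := by
    filter_upwards [(hf.asympEq_star_sum_mul_sum c).eventually_norm_lt hJK
      (eventually_lt_of_limsup_lt hJ (bdd fun i => star (c i) * c i))] with n hn
    rw [CStarRing.norm_star_mul_self, ← sq] at hn
    exact Real.le_sqrt_of_sq_le hn.le
  have limsup_le_sqrt : limsup (fun n => ‖∑ i, f i n * c i‖) l ≤ √K :=
    limsup_le_of_le (isCoboundedUnder_le_of_le l fun _ => norm_nonneg _) norm_le_sqrt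
  exact (Real.le_sqrt (nonneg c) ((nonneg _).trans hK.le)).1 limsup_le_sqrt

theorem limsup_norm_sum_mul_le [l.NeBot] (hf : IsCentralPartition l f) (c : ι → A) :
    limsup (fun n => ‖∑ i, f i n * c i‖) l ≤ ‖c‖ :=
  le_norm_of_sq_le_star_mul_self (p := fun b : ι → A => limsup (fun n => ‖∑ i, f i n * b i‖) l)
    (C := Fintype.card ι) hf.sq_limsup_norm_sum_mul_le
    (fun b => limsup_le_of_le (isCoboundedUnder_le_of_le l fun _ => norm_nonneg _)
      (.of_forall (hf.norm_sum_mul_le b))) c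

theorem eventually_norm_lt_of_asympEq [l.NeBot] (hf : IsCentralPartition l f) {c : ι → A}
    {K : ℝ} (hc : ‖c‖ < K) {x : κ → A} (hx : AsympEq l x fun n => ∑ i, f i n * c i) :
    ∀ᶠ n in l, ‖x n‖ < K := by
  obtain ⟨J, hJ, hJK⟩ := exists_between hc
  exact hx.eventually_norm_lt hJK (eventually_lt_of_limsup_lt
    ((hf.limsup_norm_sum_mul_le c).trans_lt hJ) (isBoundedUnder_of ⟨_, hf.norm_sum_mul_le c⟩))

theorem asympEq_glue_conj (hf : IsCentralPartition l f) (u : ι → 𝓜(ℂ, A)) (a : A) :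
    AsympEq l (fun n => glue f u n * a * star (glue f u n))
      fun n => ∑ i, f i n * (star (u i)).snd ((u i).fst a) := by
  have expand (n : κ) : glue f u n * a * star (glue f u n) =
      ∑ i, f i n * ∑ j, (star (u j)).snd ((u i).fst a) * f j n := by
    simp only [glue, star_sum, Finset.sum_mul, Finset.mul_sum, (u _).central]
    refine Finset.sum_comm.trans <| Finset.sum_congr rfl fun i _ =>
      Finset.sum_congr rfl fun j _ => ?_
    rw [mul_assoc, (star (u j)).central, DoubleCentralizer.star_fst,
      (hf.isSelfAdjoint j n).star_eq]
  calc (fun n => glue f u n * a * star (glue f u n))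
    AsympEq l _ fun n => ∑ i, f i n * ∑ j, (star (u j)).snd ((u i).fst a) * f j n := .of_eq expand
    AsympEq l _ fun n => ∑ i, f i n * ∑ j, f j n * (star (u j)).snd ((u i).fst a) :=
        .sum fun i _ => (AsympEq.sum fun j _ => (hf.asympEq_comm _ j).symm).bdd_mul
          (hf.norm_le_one i)
    AsympEq l _ fun n => ∑ i, f i n * (star (u i)).snd ((u i).fst a) :=
        .sum fun i _ => hf.asympEq_mul_sum (fun j => (star (u j)).snd ((u i).fst a)) i

theorem asympEq_star_glue_mul_glue_mul (hf : IsCentralPartition l f) {u : ι → 𝓜(ℂ, A)}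
    (hu : ∀ i, u i ∈ unitary 𝓜(ℂ, A)) (a : A) :
    AsympEq l (fun n => star (glue f u n) * (glue f u n * a)) fun _ => a := by
  calc (fun n => star (glue f u n) * (glue f u n * a))
    AsympEq l _ fun n => ∑ i, (star (u i)).fst (f i n * ∑ j, f j n * (u j).fst a) :=
        .of_eq fun n => by
          simp only [glue, star_sum, Finset.sum_mul, star_multiplier_snd_mul,
            (hf.isSelfAdjoint _ n).star_eq, (u _).central]
    AsympEq l _ fun n => ∑ i, (star (u i)).fst (f i n * (u i).fst a) :=
        .sum fun i _ => (hf.asympEq_mul_sum _ i).map _ (star (u i)).fst.continuous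
    AsympEq l _ fun n => ∑ i, (star (u i)).fst ((u i).fst a * f i n) :=
        .sum fun i _ => (hf.asympEq_comm _ i).map _ (star (u i)).fst.continuous
    AsympEq l _ fun n => ∑ i, a * f i n := .of_eq fun n => by
        simp only [multiplier_fst_mul, star_fst_fst_of_mem_unitary (hu _)]
    AsympEq l _ fun n => ∑ i, f i n * a := .sum fun i _ => (hf.asympEq_comm a i).symm
    AsympEq l _ fun _ => a := hf.asympEq_sum_mul a

theorem norm_glue_le (hf : IsCentralPartition l f) {u : ι → 𝓜(ℂ, A)}
    (hu : ∀ i, u i ∈ unitary 𝓜(ℂ, A)) (n : κ) : ‖glue f u n‖ ≤ Fintype.card ι :=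
  calc ‖glue f u n‖ ≤ ∑ _i : ι, (1 : ℝ) := norm_sum_le_of_le _ fun i _ =>
        (norm_snd_le_of_mem_unitary (hu i) _).trans (hf.norm_le_one i n)
    _ = Fintype.card ι := by simp

theorem tendsto_star_glue_mul_glue_sub_one_mul (hf : IsCentralPartition l f) {u : ι → 𝓜(ℂ, A)}
    (hu : ∀ i, u i ∈ unitary 𝓜(ℂ, A)) (a : A) :
    Tendsto (fun n => (star ((glue f u n : A) : Unitization ℂ A) *
      ((glue f u n : A) : Unitization ℂ A) - 1) * (a : Unitization ℂ A)) l (𝓝 0) := by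
  have lim := ((Unitization.isometry_inr (𝕜 := ℂ)).continuous.tendsto 0).comp
    (hf.asympEq_star_glue_mul_glue_mul hu a)
  simpa [sub_mul, mul_assoc, Function.comp_def] using lim

theorem eventually_exists_unitary_norm_conj_sub_sum_lt [l.NeBot] (hf : IsCentralPartition l f)
    (hGL : ∀ a : A, (a : Unitization ℂ A) ∈ closure {x : Unitization ℂ A | IsUnit x})
    {φ : ι → A → A} (hφ : ∀ i, IsApproxInner (φ i)) (E : Finset A) {δ : ℝ} (hδ : 0 < δ) :
    ∀ᶠ n in l, ∃ v ∈ unitary (Unitization ℂ A), ∀ a ∈ E,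
      ‖v * (a : Unitization ℂ A) * star v -
        ((∑ i, f i n * φ i a : A) : Unitization ℂ A)‖ < δ := by
  classical
  choose u hu huE using fun i => hφ i E (δ / 2) (half_pos hδ)
  have conj_glue : ∀ᶠ n in l, ∀ a ∈ E,
      ‖glue f u n * a * star (glue f u n) - ∑ i, f i n * φ i a‖ < δ / 2 := by
    refine (eventually_all_finset E).2 fun a ha => hf.eventually_norm_lt_of_asympEq
      (c := fun i => (star (u i)).snd ((u i).fst a) - φ i a)
      ((pi_norm_lt_iff (half_pos hδ)).2 fun i => huE i a ha) ?_
    simpa [AsympEq, mul_sub] using hf.asympEq_glue_conj u a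
  have unitary_near := eventually_exists_unitary_norm_conj_sub_lt
    (fun n => hGL (glue f u n))
    (fun n => (Unitization.norm_inr (𝕜 := ℂ) _).trans_le (hf.norm_glue_le hu n))
    (E.image ((↑) : A → Unitization ℂ A))
    (Finset.forall_mem_image.2 fun a _ => hf.tendsto_star_glue_mul_glue_sub_one_mul hu a)
    (Finset.forall_mem_image.2 fun a _ => by
      simpa using hf.tendsto_star_glue_mul_glue_sub_one_mul hu (star a)) (half_pos hδ)
  filter_upwards [conj_glue, unitary_near] with n hn ⟨v, hv, hvE⟩
  refine ⟨v, hv, fun a ha => ?_⟩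
  have glue_near := hn a ha
  rw [← Unitization.norm_inr (𝕜 := ℂ), Unitization.inr_sub, Unitization.inr_mul,
    Unitization.inr_mul, Unitization.inr_star] at glue_near
  calc _ ≤ _ := norm_sub_le_norm_sub_add_norm_sub _ _ _
    _ < δ / 2 + δ / 2 := add_lt_add (hvE _ (Finset.mem_image_of_mem _ ha)) glue_near
    _ = δ := add_halves δ

end IsCentralPartition

section Action

variable {A : Type*} [NonUnitalCStarAlgebra A] {G : Type*} [Group G]

theorem norm_map_map_inv_sub (α β : G →* (A ≃⋆ₐ[ℂ] A)) (g : G) (x : A) :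
    ‖α g (β g⁻¹ x) - x‖ = ‖β g⁻¹ x - α g⁻¹ x‖ := by
  have map_map_inv : α g (α g⁻¹ x) = x := by
    rw [← StarAlgEquiv.mul_apply, ← map_mul, mul_inv_cancel, map_one, StarAlgEquiv.one_apply]
  rw [← StarAlgEquiv.norm_map (α g) (β g⁻¹ x - α g⁻¹ x), map_sub, map_map_inv]

variable [Fintype G] {κ : Type*}

/-- Nets representing the Rohlin projections of the action `α` in the central sequence algebra:
a central partition indexed by `G` that `α` permutes by left translation. -/
structure IsRohlinFamily (α : G →* (A ≃⋆ₐ[ℂ] A)) (l : Filter κ) (f : G → κ → A) : Prop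
    extends IsCentralPartition l f where
  equivariant : ∀ a g h, Tendsto (fun n => ‖(α g (f h n) - f (g * h) n) * a‖) l (𝓝 0)

/-- Averages the maps `α h ∘ β h⁻¹` over the net `f`; when `f` is a Rohlin family of
`α`, the result asymptotically intertwines `β` with `α`. -/
noncomputable def intertwiner (α β : G →* (A ≃⋆ₐ[ℂ] A)) (f : G → κ → A) (x : A) (n : κ) : A :=
  ∑ h, f h n * α h (β h⁻¹ x)

namespace IsRohlinFamily

variable {α β : G →* (A ≃⋆ₐ[ℂ] A)} {l : Filter κ} {f : G → κ → A}

theorem asympEq_map_intertwiner (hf : IsRohlinFamily α l f) (β : G →* (A ≃⋆ₐ[ℂ] A)) (g : G)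
    (x : A) : AsympEq l (fun n => α g (intertwiner α β f x n)) (intertwiner α β f (β g x)) := by
  have reindex (n : κ) : ∑ h, f (g * h) n * α g (α h (β h⁻¹ x)) = intertwiner α β f (β g x) n := by
    refine Fintype.sum_equiv (Equiv.mulLeft g) _ _ fun h => ?_
    simp only [Equiv.coe_mulLeft, mul_inv_rev, map_mul, StarAlgEquiv.mul_apply]
    rw [← StarAlgEquiv.mul_apply (β g⁻¹), ← map_mul, inv_mul_cancel, map_one,
      StarAlgEquiv.one_apply]
  calc (fun n => α g (intertwiner α β f x n))
    AsympEq l _ fun n => ∑ h, α g (f h n) * α g (α h (β h⁻¹ x)) := .of_eq fun n => by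
        simp only [intertwiner, map_sum, map_mul]
    AsympEq l _ fun n => ∑ h, f (g * h) n * α g (α h (β h⁻¹ x)) := .sum fun h _ =>
        tendsto_zero_iff_norm_tendsto_zero.2 (by
          simpa only [sub_mul] using hf.equivariant (α g (α h (β h⁻¹ x))) g h)
    AsympEq l _ (intertwiner α β f (β g x)) := .of_eq reindex

theorem eventually_norm_intertwiner_sub_lt [l.NeBot] (hf : IsRohlinFamily α l f) {x : A} {K : ℝ}
    (hx : ∀ g, ‖β g x - α g x‖ < K) : ∀ᶠ n in l, ‖intertwiner α β f x n - x‖ < K := by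
  have norm_lt : ‖fun h => α h (β h⁻¹ x) - x‖ < K :=
    (pi_norm_lt_iff ((norm_nonneg _).trans_lt (hx 1))).2 fun h =>
      (norm_map_map_inv_sub α β h x).trans_lt (hx h⁻¹)
  refine hf.eventually_norm_lt_of_asympEq norm_lt ?_
  simpa [AsympEq, intertwiner, mul_sub, sub_sub_sub_comm] using hf.asympEq_sum_mul x

theorem eventually_exists_unitary_norm_conj_sub_intertwiner_lt [l.NeBot]
    (hf : IsRohlinFamily α l f)
    (hGL : ∀ a : A, (a : Unitization ℂ A) ∈ closure {x : Unitization ℂ A | IsUnit x})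
    (hαβ : ∀ g, IsApproxUnitarilyEquiv (α g) (β g)) (E : Finset A) {δ : ℝ} (hδ : 0 < δ) :
    ∀ᶠ n in l, ∃ v ∈ unitary (Unitization ℂ A), ∀ x ∈ E,
      ‖v * (x : Unitization ℂ A) * star v -
        ((intertwiner α β f x n : A) : Unitization ℂ A)‖ < δ :=
  hf.eventually_exists_unitary_norm_conj_sub_sum_lt hGL
    (fun h => map_inv β h ▸ (hαβ h).isApproxInner_comp_inv) E hδ

end IsRohlinFamily

end Action

theorem norm_sub_star_mul_starMap_mul_lt {A : Type*} [NonUnitalCStarAlgebra A]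
    {v : Unitization ℂ A} (hv : v ∈ unitary (Unitization ℂ A)) (φ : A →⋆ₙₐ[ℂ] A) {x y s t : A}
    {δ₁ δ₂ δ₃ : ℝ} (hx : ‖v * (x : Unitization ℂ A) * star v - (s : Unitization ℂ A)‖ < δ₁)
    (hy : ‖v * (y : Unitization ℂ A) * star v - (t : Unitization ℂ A)‖ < δ₂)
    (hst : ‖φ s - t‖ < δ₃) :
    ‖(y : Unitization ℂ A) -
      star v * Unitization.starMap φ (v * (x : Unitization ℂ A) * star v) * v‖ < δ₁ + δ₂ + δ₃ := by
  set ψ := Unitization.starMap φ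
  set X := v * (x : Unitization ℂ A) * star v
  have hψ : ‖ψ s - ψ X‖ < δ₁ := by
    rw [norm_sub_rev, ← map_sub]
    exact (NonUnitalStarAlgHom.norm_apply_le ψ _).trans_lt hx
  have hts : ‖(t : Unitization ℂ A) - ψ s‖ < δ₃ := by
    rwa [Unitization.starMap_inr, ← Unitization.inr_sub, Unitization.norm_inr, norm_sub_rev]
  rw [norm_sub_star_mul_mul_of_mem_unitary hv]
  linarith [norm_sub_le_norm_sub_add_norm_sub (v * (y : Unitization ℂ A) * star v) t (ψ X),
    norm_sub_le_norm_sub_add_norm_sub (t : Unitization ℂ A) (ψ s) (ψ X)]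

theorem rohlin_one_step_conjugacy_general {A : Type*} [NonUnitalCStarAlgebra A]
    (hGL : ∀ a : A, (a : Unitization ℂ A) ∈ closure {x : Unitization ℂ A | IsUnit x})
    {G : Type*} [Group G] [Fintype G] {α β : G →* (A ≃⋆ₐ[ℂ] A)}
    (hαβ : ∀ g, IsApproxUnitarilyEquiv (α g) (β g))
    {κ : Type*} {l : Filter κ} [l.NeBot] {f : G → κ → A} (hf : IsRohlinFamily α l f)
    (F : Finset A) (ε : ℝ) (hε : 0 < ε) :
    ∃ v ∈ unitary (Unitization ℂ A), ∀ x ∈ F,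
      (∀ g : G,
        ‖(β g x : Unitization ℂ A) -
          star v * Unitization.starMap (α g : A →⋆ₙₐ[ℂ] A)
            (v * (x : Unitization ℂ A) * star v) * v‖ < ε) ∧
      ‖v * (x : Unitization ℂ A) - (x : Unitization ℂ A) * v‖ <
        ε + ⨆ g : G, ‖β g x - α g x‖ := by
  classical
  have hδ : 0 < ε / 3 := by positivity
  let E := (Finset.univ ×ˢ F).image fun p : G × A => β p.1 p.2
  have conj_near := hf.eventually_exists_unitary_norm_conj_sub_intertwiner_lt hGL hαβ E hδ
  have equivariant : ∀ᶠ n in l, ∀ x ∈ F, ∀ g,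
      ‖α g (intertwiner α β f x n) - intertwiner α β f (β g x) n‖ < ε / 3 :=
    (eventually_all_finset F).2 fun x _ => eventually_all.2 fun g =>
      (hf.asympEq_map_intertwiner β g x).eventually_norm_sub_lt hδ
  have near_id : ∀ᶠ n in l, ∀ x ∈ F,
      ‖intertwiner α β f x n - x‖ < ε / 3 + ⨆ g, ‖β g x - α g x‖ :=
    (eventually_all_finset F).2 fun x _ => hf.eventually_norm_intertwiner_sub_lt fun g =>
      lt_add_of_pos_of_le hδ
        (le_ciSup (f := fun g => ‖β g x - α g x‖) (Set.finite_range _).bddAbove g)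
  obtain ⟨n, ⟨v, hv, hvE⟩, hα, hid⟩ := (conj_near.and (equivariant.and near_id)).exists
  have hvβ {x : A} (hx : x ∈ F) (g : G) : ‖v * (β g x : Unitization ℂ A) * star v -
      ((intertwiner α β f (β g x) n : A) : Unitization ℂ A)‖ < ε / 3 :=
    hvE _ (Finset.mem_image.2 ⟨(g, x), by simpa using hx, rfl⟩)
  have hvx {x : A} (hx : x ∈ F) : ‖v * (x : Unitization ℂ A) * star v -
      ((intertwiner α β f x n : A) : Unitization ℂ A)‖ < ε / 3 := by
    simpa only [map_one, StarAlgEquiv.one_apply] using hvβ hx 1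
  refine ⟨v, hv, fun x hx => ⟨fun g => ?_, ?_⟩⟩
  · linarith [norm_sub_star_mul_starMap_mul_lt hv (α g) (hvx hx) (hvβ hx g) (hα x hx g)]
  · have id_near := hid x hx
    rw [← Unitization.norm_inr (𝕜 := ℂ), Unitization.inr_sub] at id_near
    rw [norm_mul_sub_mul_of_mem_unitary hv]
    linarith [hvx hx, norm_sub_le_norm_sub_add_norm_sub (v * (x : Unitization ℂ A) * star v)
      ((intertwiner α β f x n : A) : Unitization ℂ A) x]

/-- Lemma 3.4: Let `A` be a separable C*-algebra with `A ⊆ closure(GL(Ã))`, and let `α`, `β`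
be actions of a finite group `G` on `A` such that `α_g` and `β_g` are approximately unitarily
equivalent for every `g` and `α` admits Rohlin sequences.  Then for every finite set `F ⊆ A`
and `ε > 0` there is a unitary `v ∈ Ã` with
`‖β_g(x) − v* α_g(v x v*) v‖ < ε` and `‖v x − x v‖ < ε + sup_g ‖β_g(x) − α_g(x)‖` on `F`. -/
theorem rohlin_one_step_conjugacy
    {A : Type*} [NonUnitalCStarAlgebra A] [PartialOrder A] [StarOrderedRing A]
    [TopologicalSpace.SeparableSpace A]
    (hGL : ∀ a : A, (a : Unitization ℂ A) ∈ closure {x : Unitization ℂ A | IsUnit x})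
    {G : Type*} [Group G] [Fintype G]
    (α β : G → A ≃⋆ₐ[ℂ] A)
    (hα1 : ∀ a : A, α 1 a = a)
    (hαmul : ∀ (g h : G) (a : A), α (g * h) a = α g (α h a))
    (hβ1 : ∀ a : A, β 1 a = a)
    (hβmul : ∀ (g h : G) (a : A), β (g * h) a = β g (β h a))
    -- (1) `α_g` and `β_g` are approximately unitarily equivalent, via unitaries in `M(A)`
    (haue : ∀ (g : G) (F₁ : Finset A) (δ : ℝ), 0 < δ →
      ∃ u ∈ unitary 𝓜(ℂ, A), ∀ y ∈ F₁, ‖(star u).snd (u.fst (β g y)) - α g y‖ < δ)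
    -- (2) `α` admits Rohlin sequences `(f_{g,n})_n` of positive contractions
    (f : G → ℕ → A)
    (hf_pos : ∀ g n, 0 ≤ f g n)
    (hf_norm : ∀ g n, ‖f g n‖ ≤ 1)
    (hf_central : ∀ (a : A) (g : G),
      Tendsto (fun n => ‖f g n * a - a * f g n‖) atTop (𝓝 0))
    (hf_orth : ∀ (a : A) (g h : G), g ≠ h →
      Tendsto (fun n => ‖f g n * f h n * a‖) atTop (𝓝 0))
    (hf_idem : ∀ (a : A) (g : G),
      Tendsto (fun n => ‖(f g n * f g n - f g n) * a‖) atTop (𝓝 0))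
    (hf_sum : ∀ a : A,
      Tendsto (fun n => ‖(∑ k : G, f k n) * a - a‖) atTop (𝓝 0))
    (hf_equiv : ∀ (a : A) (g h : G),
      Tendsto (fun n => ‖(α g (f h n) - f (g * h) n) * a‖) atTop (𝓝 0)) :
    ∀ (F : Finset A) (ε : ℝ), 0 < ε →
      ∃ v ∈ unitary (Unitization ℂ A), ∀ x ∈ F,
        (∀ g : G,
          ‖(β g x : Unitization ℂ A) -
            star v * Unitization.starMap (α g : A →⋆ₙₐ[ℂ] A)
              (v * (x : Unitization ℂ A) * star v) * v‖ < ε) ∧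
        ‖v * (x : Unitization ℂ A) - (x : Unitization ℂ A) * v‖ <
          ε + ⨆ g : G, ‖β g x - α g x‖ :=
  rohlin_one_step_conjugacy_general hGL
    (α := MonoidHom.mk' α fun g h => StarAlgEquiv.ext (hαmul g h))
    (β := MonoidHom.mk' β fun g h => StarAlgEquiv.ext (hβmul g h)) haue (f := f)
    ⟨⟨fun g n => (hf_pos g n).isSelfAdjoint, hf_norm, hf_central, hf_orth, hf_idem, hf_sum⟩,
      hf_equiv⟩
end

section
/- Let α be an action of a finite group G on a separable C*-algebra A which is locally representable: there are an increasing sequence (A_n)_{n∈ℕ} of α-invariant C*-subalgebras of A with dense union, and for each n a unitary representation u⁽ⁿ⁾ of G in the multiplier algebra M(A_n) (i.e. each u⁽ⁿ⁾(g) is unitary, g ↦ u⁽ⁿ⁾(g) is a group homomorphism with u⁽ⁿ⁾(ι) = 1 for the identity ι of G) such that α_g(a) = u⁽ⁿ⁾(g)·a·u⁽ⁿ⁾(g)* for all a ∈ A_n and g ∈ G. Let (h_n) be a sequence of positive contractions with h_n ∈ (A_n)^α which is an approximate unit for A, and set w_n(g) := u⁽ⁿ⁾(g)·h_n ∈ A_n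 ⊆ A. Then for all g, h ∈ G and all a ∈ A: (i) w_n(g)* = w_n(g⁻¹) for every n; (ii) lim_n ‖w_n(g)·a·w_n(g)* − α_g(a)‖ = 0; (iii) lim_n ‖(w_n(g)·w_n(h) − w_n(gh))·a‖ = 0; and (iv) lim_n ‖w_n(ι)·a − a‖ = 0. (The content of Proposition 4.8 of the paper — every locally representable action on a separable C*-algebra is approximately representable — stated at the level of representative sequences for the sequence algebra A^∞ = ℓ^∞(ℕ,A)/c₀(A).) -/
open scoped MultiplierAlgebra
open Filter Topology

/-!
If `x` is self-adjoint and fixed under conjugation by the unitaries `u(g)`, then it commutes with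
them, so `w(g) = u(g)x` satisfies `w(g)* = w(g⁻¹)` and `w(g)w(g') = w(gg')x`, while
`w(g)aw(g)* = u(g)(xax)u(g)*`. For `x = h_n` the latter is `α_g(h_n a h_n)` as soon as `a ∈ A_n`,
and it tends to `α_g(a)`. The maps `a ↦ w_n(g)aw_n(g)*` are contractions, so the convergence passes
from the dense union of the `A_n` to all of `A`.
-/

section Approximation

open scoped NNReal

variable {ι R : Type*} {l : Filter ι} [NonUnitalSeminormedRing R]

theorem tendsto_mul_of_isBoundedUnder_of_tendsto {e y : ι → R} {x : R}
    (he : l.IsBoundedUnder (· ≤ ·) (norm ∘ e)) (hex : Tendsto (fun i => e i * x) l (𝓝 x))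
    (hy : Tendsto y l (𝓝 x)) : Tendsto (fun i => e i * y i) l (𝓝 x) := by
  have hsub : Tendsto (fun i => e i * (y i - x)) l (𝓝 0) :=
    isBoundedUnder_le_mul_tendsto_zero he (tendsto_sub_nhds_zero_iff.mpr hy)
  simpa [mul_sub] using hsub.add hex

variable [StarRing R] [NormedStarGroup R]

theorem tendsto_mul_mul_of_isSelfAdjoint {e : ι → R} (he : l.IsBoundedUnder (· ≤ ·) (norm ∘ e))
    (he_sa : ∀ i, IsSelfAdjoint (e i)) (he_left : ∀ x, Tendsto (fun i => e i * x) l (𝓝 x))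
    (x : R) : Tendsto (fun i => e i * x * e i) l (𝓝 x) := by
  have he_right : Tendsto (fun i => x * e i) l (𝓝 x) := by
    simpa [(he_sa _).star_eq] using (he_left (star x)).star
  simpa only [mul_assoc] using tendsto_mul_of_isBoundedUnder_of_tendsto he (he_left x) he_right

theorem lipschitzWith_mul_mul_star (w : R) :
    LipschitzWith (‖w‖₊ * ‖w‖₊) (fun a => w * a * star w) :=
  LipschitzWith.of_dist_le_mul fun a b => by
    calc dist (w * a * star w) (w * b * star w) = ‖w * (a - b) * star w‖ := by
          rw [dist_eq_norm, mul_sub, sub_mul]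
      _ ≤ ‖w‖ * ‖a - b‖ * ‖star w‖ := norm_mul₃_le
      _ = ‖w‖ * ‖w‖ * dist a b := by rw [norm_star, dist_eq_norm, mul_right_comm]

theorem tendsto_mul_mul_star_of_dense {w : ι → R} {C : ℝ≥0} (hw : ∀ i, ‖w i‖₊ ≤ C) {φ : R → R}
    (hφ : Continuous φ) {s : Set R} (hs : Dense s)
    (hsφ : ∀ a ∈ s, Tendsto (fun i => w i * a * star (w i)) l (𝓝 (φ a))) (a : R) :
    Tendsto (fun i => w i * a * star (w i)) l (𝓝 (φ a)) := by
  have hlip (i : ι) : LipschitzWith (C * C) (fun a => w i * a * star (w i)) :=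
    (lipschitzWith_mul_mul_star (w i)).weaken (mul_le_mul' (hw i) (hw i))
  have hequi := (LipschitzWith.uniformEquicontinuous _ _ hlip).equicontinuous
  exact hs.induction hsφ (hequi.isClosed_setOfPred_tendsto hφ) a

end Approximation

section Multiplier

variable {𝕜 B : Type*} [NontriviallyNormedField 𝕜] [NonUnitalNormedRing B] [NormedSpace 𝕜 B]
  [SMulCommClass 𝕜 B B] [IsScalarTower 𝕜 B B] [StarRing B]

theorem multiplier_fst_mul_s8 [CStarRing B] (m : 𝓜(𝕜, B)) (a b : B) :
    m.fst (a * b) = m.fst a * b := by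
  rw [← sub_eq_zero, ← CStarRing.star_mul_self_eq_zero_iff, mul_sub, ← mul_assoc, ← m.central,
    ← m.central, mul_assoc, sub_self]

variable [StarRing 𝕜] [StarModule 𝕜 B]

section NormedStarGroup

variable [NormedStarGroup B]

/-- Conjugation `m b m*` of an element `b` of `B` by a multiplier `m`: left multiplication by `m`
is `m.fst`, and right multiplication by `m*` is `(star m).snd`. -/
def multiplierConj (m : 𝓜(𝕜, B)) (b : B) : B :=
  (star m).snd (m.fst b)

theorem multiplier_snd_eq_fst_of_conj_eq {m : 𝓜(𝕜, B)} (hm : m ∈ unitary 𝓜(𝕜, B)) {x : B}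
    (hx : multiplierConj m x = x) : m.snd x = m.fst x :=
  calc m.snd x = m.snd ((star m).snd (m.fst x)) := by rw [← multiplierConj, hx]
    _ = (star m * m).snd (m.fst x) := by rw [DoubleCentralizer.mul_snd]; rfl
    _ = m.fst x := by rw [Unitary.star_mul_self_of_mem hm]; rfl

theorem star_multiplier_fst_mul_fst (m : 𝓜(𝕜, B)) (a b : B) :
    star (m.fst a) * m.fst b = star a * (star m * m).fst b := by
  have hstar : star (m.fst a) = (star m).snd (star a) := by
    rw [DoubleCentralizer.star_snd, star_star]
  rw [hstar, (star m).central, DoubleCentralizer.mul_fst]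
  rfl

end NormedStarGroup

variable [CStarRing B]

theorem multiplierConj_mul_star (m : 𝓜(𝕜, B)) (a b : B) :
    multiplierConj m (a * star b) = m.fst a * star (m.fst b) := by
  rw [multiplierConj, DoubleCentralizer.star_snd, multiplier_fst_mul_s8, star_mul, star_star,
    multiplier_fst_mul_s8, star_mul, star_star]

theorem norm_multiplier_fst_of_mem_unitary {m : 𝓜(𝕜, B)} (hm : m ∈ unitary 𝓜(𝕜, B)) (x : B) :
    ‖m.fst x‖ = ‖x‖ := by
  rw [← mul_self_inj (norm_nonneg _) (norm_nonneg _), ← CStarRing.norm_star_mul_self,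
    ← CStarRing.norm_star_mul_self, star_multiplier_fst_mul_fst, Unitary.star_mul_self_of_mem hm]
  rfl

end Multiplier

section CutDown

variable {𝕜 B G : Type*} [NontriviallyNormedField 𝕜] [NonUnitalNormedRing B] [NormedSpace 𝕜 B]
  [SMulCommClass 𝕜 B B] [IsScalarTower 𝕜 B B] [StarRing B] [StarRing 𝕜] [StarModule 𝕜 B]
  [Group G]

section NormedStarGroup

variable [NormedStarGroup B]

/-- The cut-down `g ↦ u(g)x` to `B`, by an element `x` of `B`, of a unitary representation `u` of
`G` in the multiplier algebra of `B`. -/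
def cutDown (u : G →* unitary 𝓜(𝕜, B)) (x : B) (g : G) : B :=
  (u g : 𝓜(𝕜, B)).fst x

theorem cutDown_one (u : G →* unitary 𝓜(𝕜, B)) (x : B) : cutDown u x 1 = x := by
  rw [cutDown, map_one]
  rfl

theorem star_cutDown {u : G →* unitary 𝓜(𝕜, B)} {x : B}
    (hx_sa : IsSelfAdjoint x) {g : G} (hx : multiplierConj (u g : 𝓜(𝕜, B)) x = x) :
    star (cutDown u x g) = cutDown u x g⁻¹ := by
  rw [cutDown, cutDown, map_inv, ← Unitary.star_eq_inv, Unitary.coe_star,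
    DoubleCentralizer.star_fst, hx_sa.star_eq, multiplier_snd_eq_fst_of_conj_eq (u g).2 hx]

end NormedStarGroup

variable [CStarRing B]

theorem norm_cutDown (u : G →* unitary 𝓜(𝕜, B)) (x : B) (g : G) : ‖cutDown u x g‖ = ‖x‖ :=
  norm_multiplier_fst_of_mem_unitary (u g).2 x

theorem cutDown_mul_mul_star_cutDown (u : G →* unitary 𝓜(𝕜, B)) {x : B}
    (hx_sa : IsSelfAdjoint x) (g : G) (a : B) :
    cutDown u x g * a * star (cutDown u x g) = multiplierConj (u g : 𝓜(𝕜, B)) (x * a * x) := by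
  conv_rhs => rw [← hx_sa.star_eq, multiplierConj_mul_star, hx_sa.star_eq, multiplier_fst_mul_s8]
  rfl

theorem cutDown_mul_cutDown {u : G →* unitary 𝓜(𝕜, B)} {x : B} (g : G)
    {g' : G} (hx : multiplierConj (u g' : 𝓜(𝕜, B)) x = x) :
    cutDown u x g * cutDown u x g' = cutDown u x (g * g') * x :=
  calc (u g : 𝓜(𝕜, B)).fst x * (u g' : 𝓜(𝕜, B)).fst x
      = (u g : 𝓜(𝕜, B)).fst (x * (u g' : 𝓜(𝕜, B)).fst x) := (multiplier_fst_mul_s8 ..).symm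
    _ = (u g : 𝓜(𝕜, B)).fst ((u g' : 𝓜(𝕜, B)).snd x * x) := by rw [(u g' : 𝓜(𝕜, B)).central]
    _ = (u g : 𝓜(𝕜, B)).fst ((u g' : 𝓜(𝕜, B)).fst x * x) := by
      rw [multiplier_snd_eq_fst_of_conj_eq (u g').2 hx]
    _ = (u g : 𝓜(𝕜, B)).fst ((u g' : 𝓜(𝕜, B)).fst x) * x := multiplier_fst_mul_s8 ..
    _ = cutDown u x (g * g') * x := by rw [cutDown, map_mul]; rfl

end CutDown

theorem locallyRepresentable_approximatelyRepresentable_general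
    {A G ι : Type*} [NonUnitalCStarAlgebra A] [Group G] [Preorder ι] (α : G → A ≃⋆ₐ[ℂ] A)
    (𝒜 : ι → NonUnitalStarSubalgebra ℂ A) (h𝒜closed : ∀ n, IsClosed ((𝒜 n : Set A)))
    (h𝒜mono : Monotone 𝒜) (h𝒜dense : Dense (⋃ n, (𝒜 n : Set A)))
    (u : (n : ι) → G →* unitary 𝓜(ℂ, ↥(𝒜 n)))
    (hu_rep : ∀ (n : ι) (g : G) (a : 𝒜 n),
      α g (a : A) = (multiplierConj (u n g : 𝓜(ℂ, 𝒜 n)) a : 𝒜 n))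
    (h : (n : ι) → 𝒜 n) (h_sa : ∀ n, IsSelfAdjoint (h n)) (h_norm : ∀ n, ‖h n‖ ≤ 1)
    (h_fix : ∀ (n : ι) (g : G), α g (h n) = h n)
    (h_approx : ∀ x : A, Tendsto (fun n => ‖h n * x - x‖) atTop (𝓝 0)) :
    let w (n : ι) (g : G) : A := (cutDown (u n) (h n) g : 𝒜 n)
    (∀ (n : ι) (g : G), star (w n g) = w n g⁻¹) ∧
    (∀ (g : G) (a : A),
      Tendsto (fun n => ‖w n g * a * star (w n g) - α g a‖) atTop (𝓝 0)) ∧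
    (∀ (g g' : G) (a : A),
      Tendsto (fun n => ‖(w n g * w n g' - w n (g * g')) * a‖) atTop (𝓝 0)) ∧
    (∀ a : A, Tendsto (fun n => ‖w n 1 * a - a‖) atTop (𝓝 0)) := by
  intro w
  have hconj (n : ι) (g : G) : multiplierConj (u n g : 𝓜(ℂ, 𝒜 n)) (h n) = h n :=
    Subtype.ext ((hu_rep n g (h n)).symm.trans (h_fix n g))
  have hmul (n : ι) (g g' : G) : w n g * w n g' = w n (g * g') * h n :=
    congr_arg Subtype.val (cutDown_mul_cutDown g (hconj n g'))
  have hw_norm (n : ι) (g : G) : ‖w n g‖ ≤ 1 := (norm_cutDown (u n) (h n) g).trans_le (h_norm n)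
  refine ⟨fun n g => congr_arg Subtype.val (star_cutDown (h_sa n) (hconj n g)), fun g a => ?_,
    fun g g' a => ?_, fun a => ?_⟩
  · rw [← tendsto_iff_norm_sub_tendsto_zero]
    have hα : Continuous (α g) := (StarAlgEquiv.isometry (α g)).continuous
    refine tendsto_mul_mul_star_of_dense (C := 1) (fun n => hw_norm n g) hα h𝒜dense
      (fun b hb => ?_) a
    obtain ⟨m, hm⟩ := Set.mem_iUnion.mp hb
    have hsandwich : Tendsto (fun n => (h n : A) * b * h n) atTop (𝓝 b) :=
      tendsto_mul_mul_of_isSelfAdjoint (isBoundedUnder_of ⟨1, h_norm⟩)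
        (fun n => congr_arg Subtype.val (h_sa n))
        (fun x => tendsto_iff_norm_sub_tendsto_zero.mpr (h_approx x)) b
    refine ((hα.tendsto b).comp hsandwich).congr' ?_
    filter_upwards [eventually_ge_atTop m] with n hn
    have himpl := cutDown_mul_mul_star_cutDown (u n) (h_sa n) g ⟨b, h𝒜mono hn hm⟩
    exact (hu_rep n g _).trans (congr_arg Subtype.val himpl).symm
  · refine squeeze_zero (fun _ => norm_nonneg _) (fun n => ?_) (h_approx a)
    calc ‖(w n g * w n g' - w n (g * g')) * a‖ = ‖w n (g * g') * (h n * a - a)‖ := by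
          rw [hmul, sub_mul, mul_assoc, ← mul_sub]
      _ ≤ ‖w n (g * g')‖ * ‖h n * a - a‖ := norm_mul_le _ _
      _ ≤ ‖h n * a - a‖ := mul_le_of_le_one_left (norm_nonneg _) (hw_norm n (g * g'))
  · have hw_one (n : ι) : w n 1 = h n := congr_arg Subtype.val (cutDown_one (u n) (h n))
    simpa only [hw_one] using h_approx a

/-- Proposition 4.8 (at the level of representative sequences): a locally representable
action `α` of a finite group `G` on a separable C*-algebra `A` is approximately
representable.  Here `α` is implemented on each member `A_n` of an increasing sequence of
`α`-invariant C*-subalgebras with dense union by a unitary representation `u⁽ⁿ⁾` of `G` in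
the multiplier algebra `M(A_n)`, `(h_n)` is an approximate unit for `A` of positive
contractions fixed by `α` with `h_n ∈ A_n`, and `w_n(g) = u⁽ⁿ⁾(g)·h_n ∈ A`.  The sequences
`(w_n(g))_n` represent a unitary representation of `G` in `F(A^α, A)` implementing `α`. -/
theorem locallyRepresentable_approximatelyRepresentable
    {A : Type*} [NonUnitalCStarAlgebra A] [PartialOrder A] [StarOrderedRing A]
    [TopologicalSpace.SeparableSpace A]
    {G : Type*} [Group G] [Finite G]
    (α : G → A ≃⋆ₐ[ℂ] A)
    (hα1 : ∀ a : A, α 1 a = a)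
    (hαmul : ∀ (g h : G) (a : A), α (g * h) a = α g (α h a))
    (𝒜 : ℕ → NonUnitalStarSubalgebra ℂ A)
    (h𝒜closed : ∀ n, IsClosed ((𝒜 n : Set A)))
    (h𝒜mono : Monotone 𝒜)
    (h𝒜inv : ∀ (n : ℕ) (g : G), ∀ a ∈ 𝒜 n, α g a ∈ 𝒜 n)
    (h𝒜dense : Dense (⋃ n, (𝒜 n : Set A)))
    -- the unitary representations `u⁽ⁿ⁾` of `G` in `M(A_n)` implementing `α` on `A_n`
    (u : (n : ℕ) → G → 𝓜(ℂ, ↥(𝒜 n)))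
    (hu_unitary : ∀ (n : ℕ) (g : G), u n g ∈ unitary 𝓜(ℂ, ↥(𝒜 n)))
    (hu_one : ∀ n : ℕ, u n 1 = 1)
    (hu_mul : ∀ (n : ℕ) (g h : G), u n (g * h) = u n g * u n h)
    (hu_rep : ∀ (n : ℕ) (g : G) (a : 𝒜 n),
      α g (a : A) = (((star (u n g)).snd ((u n g).fst a) : ↥(𝒜 n)) : A))
    -- the invariant approximate unit `(h_n)` with `h_n ∈ (A_n)^α`
    (h : ℕ → A) (hmem : ∀ n, h n ∈ 𝒜 n)
    (h_pos : ∀ n, 0 ≤ h n) (h_norm : ∀ n, ‖h n‖ ≤ 1)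
    (h_fix : ∀ (n : ℕ) (g : G), α g (h n) = h n)
    (h_approx : ∀ x : A, Tendsto (fun n => ‖h n * x - x‖) atTop (𝓝 0))
    -- `w_n(g) = u⁽ⁿ⁾(g) · h_n ∈ A_n ⊆ A`
    (w : ℕ → G → A)
    (hw : ∀ (n : ℕ) (g : G), w n g = (((u n g).fst ⟨h n, hmem n⟩ : ↥(𝒜 n)) : A)) :
    (∀ (n : ℕ) (g : G), star (w n g) = w n g⁻¹) ∧
    (∀ (g : G) (a : A),
      Tendsto (fun n => ‖w n g * a * star (w n g) - α g a‖) atTop (𝓝 0)) ∧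
    (∀ (g h' : G) (a : A),
      Tendsto (fun n => ‖(w n g * w n h' - w n (g * h')) * a‖) atTop (𝓝 0)) ∧
    (∀ a : A, Tendsto (fun n => ‖w n 1 * a - a‖) atTop (𝓝 0)) := by
  obtain rfl : w = fun n g => ((u n g).fst ⟨h n, hmem n⟩ : A) := funext₂ hw
  exact locallyRepresentable_approximatelyRepresentable_general α 𝒜 h𝒜closed h𝒜mono h𝒜dense
    (fun n => .mk' (fun g => ⟨u n g, hu_unitary n g⟩) fun g g' => Subtype.ext (hu_mul n g g'))
    hu_rep (fun n => ⟨h n, hmem n⟩) (fun n => Subtype.ext (IsSelfAdjoint.of_nonneg (h_pos n)))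
    h_norm h_fix h_approx
end

section
/- Let A be a C*-algebra, let G be a finite group, let {v_g}_{g∈G} be unitary elements of the multiplier algebra M(A), and for each g ∈ G let (f_{g,n})_{n∈ℕ} be a sequence of positive contractions in A such that for all a ∈ A and all g, h ∈ G: lim_n ‖f_{g,n}·a − a·f_{g,n}‖ = 0, lim_n ‖f_{g,n}·f_{h,n}·a‖ = 0 whenever g ≠ h, lim_n ‖(f_{g,n}² − f_{g,n})·a‖ = 0, and lim_n ‖(Σ_{k∈G} f_{k,n})·a − a‖ = 0. Set w_n := Σ_{g∈G} v_g·f_{g,n} ∈ A. Then lim_n ‖w_n*·w_n·a − a‖ = 0 for every a ∈ A. (The computation w*w·a = a for the element w = Σ_g v_g f_g of A^∞ carried out in the proof of Lemma 3.4 of the paper.) -/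
open scoped MultiplierAlgebra
open Filter Topology

/-! Expanding `w* w a` gives the terms `(v_g f_g)* (v_h f_h) a`. Asymptotic centrality of `f_h`
moves it past the multiplier, so such a term is asymptotically `f_g* f_h (v_g* v_h a)`. By
orthogonality only the diagonal terms `f_g* f_g (v_g* v_g a)` survive, and `v_g* v_g = 1` removes
the multipliers from them. The limit is therefore the same as for `v = 1`, where `w = ∑ g, f_g` is
an asymptotically central left approximate unit; centrality makes `w*` one too, so
`w* w a → a`. -/

section Multiplier

variable {𝕜 A : Type*} [NontriviallyNormedField 𝕜] [NonUnitalNormedRing A] [NormedSpace 𝕜 A]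
  [SMulCommClass 𝕜 A A] [IsScalarTower 𝕜 A A]

-- Without the factor `x`, right `A`-linearity of `u.fst` can fail: `A` may have annihilators.
theorem mul_fst_mul (u : 𝓜(𝕜, A)) (x a b : A) : x * u.fst (a * b) = x * u.fst a * b := by
  rw [← u.central, ← u.central, mul_assoc]

theorem star_fst_mul_fst_mul [StarRing 𝕜] [StarRing A] [StarModule 𝕜 A] [NormedStarGroup A]
    (u v : 𝓜(𝕜, A)) (x y a : A) :
    star (u.fst x) * v.fst y * a = star x * (star u * v).fst (y * a) :=
  calc
    star (u.fst x) * v.fst y * a = star (u.fst x) * v.fst (y * a) := (mul_fst_mul v _ y a).symm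
    _ = (star u).snd (star x) * v.fst (y * a) := by
      rw [DoubleCentralizer.star_snd, star_star]
    _ = star x * (star u * v).fst (y * a) := (star u).central _ _

end Multiplier

section AsymptoticallyCentral

variable {α : Type*} {l : Filter α}

/-- A family `e` is asymptotically central along `l` if it asymptotically commutes with every
element of `A`. A bounded such sequence is a central sequence, that is, a representative of an
element of `A^∞ ∩ A'`; boundedness is not part of this definition. -/
def IsAsymptoticallyCentral {A : Type*} [NonUnitalNonAssocRing A] [TopologicalSpace A]
    (l : Filter α) (e : α → A) : Prop :=
  ∀ a, Tendsto (fun n => e n * a - a * e n) l (𝓝 0)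

namespace IsAsymptoticallyCentral

theorem sum {A ι : Type*} [NonUnitalNonAssocRing A] [TopologicalSpace A] [ContinuousAdd A]
    {f : ι → α → A} {s : Finset ι} (hf : ∀ g ∈ s, IsAsymptoticallyCentral l (f g)) :
    IsAsymptoticallyCentral l (fun n => ∑ g ∈ s, f g n) := by
  intro a
  simpa [Finset.sum_mul, Finset.mul_sum] using tendsto_finsetSum s fun g hg => hf g hg a

theorem tendsto_star_mul {A : Type*} [NonUnitalNonAssocRing A] [StarRing A] [TopologicalSpace A]
    [ContinuousSub A] [ContinuousStar A] {e : α → A} (he : IsAsymptoticallyCentral l e)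
    (hunit : ∀ a, Tendsto (fun n => e n * a) l (𝓝 a)) (a : A) :
    Tendsto (fun n => star (e n) * a) l (𝓝 a) := by
  have hright : Tendsto (fun n => star a * e n) l (𝓝 (star a)) := by
    simpa using (hunit (star a)).sub (he (star a))
  simpa using hright.star

theorem tendsto_star_mul_self_mul {A : Type*} [NonUnitalSeminormedRing A] [StarRing A]
    [NormedStarGroup A] {e : α → A} (he : IsAsymptoticallyCentral l e)
    (hbdd : IsBoundedUnder (· ≤ ·) l fun n => ‖e n‖)
    (hunit : ∀ a, Tendsto (fun n => e n * a) l (𝓝 a)) (a : A) :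
    Tendsto (fun n => star (e n) * e n * a) l (𝓝 a) := by
  have hstar : IsBoundedUnder (· ≤ ·) l (norm ∘ fun n => star (e n)) := by
    simpa [Function.comp_def] using hbdd
  have hdiff : Tendsto (fun n => star (e n) * (e n * a - a)) l (𝓝 0) :=
    isBoundedUnder_le_mul_tendsto_zero hstar (tendsto_sub_nhds_zero_iff.mpr (hunit a))
  simpa [mul_sub, mul_assoc] using hdiff.add (he.tendsto_star_mul hunit a)

section Multiplier

variable {𝕜 A : Type*} [NontriviallyNormedField 𝕜] [NonUnitalNormedRing A] [NormedSpace 𝕜 A]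
  [SMulCommClass 𝕜 A A] [IsScalarTower 𝕜 A A] {f e : α → A}

theorem tendsto_mul_fst_mul_sub (he : IsAsymptoticallyCentral l e)
    (hf : IsBoundedUnder (· ≤ ·) l fun n => ‖f n‖) (u : 𝓜(𝕜, A)) (a : A) :
    Tendsto (fun n => f n * u.fst (e n * a) - f n * e n * u.fst a) l (𝓝 0) := by
  have hcomm : Tendsto (fun n => u.fst (e n * a - a * e n) - (e n * u.fst a - u.fst a * e n))
      l (𝓝 0) := by
    simpa using ((u.fst.continuous.tendsto 0).comp (he a)).sub (he (u.fst a))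
  refine (isBoundedUnder_le_mul_tendsto_zero hf hcomm).congr fun n => ?_
  simp only [map_sub, mul_sub, mul_fst_mul u (f n) a, mul_assoc]
  abel

theorem tendsto_star_fst_mul_fst_mul_sub [StarRing 𝕜] [StarRing A] [StarModule 𝕜 A]
    [NormedStarGroup A] (he : IsAsymptoticallyCentral l e)
    (hf : IsBoundedUnder (· ≤ ·) l fun n => ‖f n‖) (u v : 𝓜(𝕜, A)) (a : A) :
    Tendsto (fun n => star (u.fst (f n)) * v.fst (e n) * a -
      star (f n) * e n * (star u * v).fst a) l (𝓝 0) := by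
  simp only [star_fst_mul_fst_mul]
  exact he.tendsto_mul_fst_mul_sub (by simpa only [norm_star] using hf) (star u * v) a

end Multiplier

end IsAsymptoticallyCentral

end AsymptoticallyCentral

section RohlinSum

variable {α 𝕜 A ι : Type*} {l : Filter α} [NontriviallyNormedField 𝕜] [StarRing 𝕜]
  [NonUnitalNormedRing A] [StarRing A] [NormedStarGroup A] [NormedSpace 𝕜 A]
  [SMulCommClass 𝕜 A A] [IsScalarTower 𝕜 A A] [StarModule 𝕜 A] [Fintype ι]

theorem tendsto_star_sum_fst_mul_sum_fst_mul_sub (v : ι → 𝓜(𝕜, A)) {f : ι → α → A}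
    (hf_bdd : ∀ g, IsBoundedUnder (· ≤ ·) l fun n => ‖f g n‖)
    (hf_central : ∀ g, IsAsymptoticallyCentral l (f g))
    (hf_orth : ∀ a g h, g ≠ h → Tendsto (fun n => star (f g n) * f h n * a) l (𝓝 0)) (a : A) :
    Tendsto (fun n => star (∑ g, (v g).fst (f g n)) * (∑ g, (v g).fst (f g n)) * a -
      ∑ g, star (f g n) * f g n * (star (v g) * v g).fst a) l (𝓝 0) := by
  classical
  have hterm (g h : ι) : Tendsto (fun n => star ((v g).fst (f g n)) * (v h).fst (f h n) * a -
      if g = h then star (f g n) * f g n * (star (v g) * v g).fst a else 0) l (𝓝 0) := by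
    have hmove := (hf_central h).tendsto_star_fst_mul_fst_mul_sub (hf_bdd g) (v g) (v h) a
    rcases eq_or_ne g h with rfl | hgh
    · simpa only [if_true] using hmove
    · simpa [hgh] using hmove.add (hf_orth ((star (v g) * v h).fst a) g h hgh)
  have hsum := tendsto_finsetSum Finset.univ fun h _ =>
    tendsto_finsetSum Finset.univ fun g _ => hterm g h
  simpa [star_sum, Finset.sum_mul, Finset.mul_sum, Finset.sum_sub_distrib] using hsum

theorem rohlin_sum_approximate_isometry_general (v : ι → 𝓜(𝕜, A)) (hv : ∀ g, star (v g) * v g = 1)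
    {f : ι → α → A} (hf_bdd : ∀ g, IsBoundedUnder (· ≤ ·) l fun n => ‖f g n‖)
    (hf_central : ∀ g, IsAsymptoticallyCentral l (f g))
    (hf_orth : ∀ a g h, g ≠ h → Tendsto (fun n => star (f g n) * f h n * a) l (𝓝 0))
    (hf_sum : ∀ a, Tendsto (fun n => (∑ g, f g n) * a) l (𝓝 a)) (a : A) :
    Tendsto (fun n => star (∑ g, (v g).fst (f g n)) * (∑ g, (v g).fst (f g n)) * a) l (𝓝 a) := by
  have hw : Tendsto (fun n => star (∑ g, (v g).fst (f g n)) * (∑ g, (v g).fst (f g n)) * a -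
      ∑ g, star (f g n) * f g n * a) l (𝓝 0) := by
    simpa [hv] using tendsto_star_sum_fst_mul_sum_fst_mul_sub v hf_bdd hf_central hf_orth a
  have hs : Tendsto (fun n => star (∑ g, f g n) * (∑ g, f g n) * a -
      ∑ g, star (f g n) * f g n * a) l (𝓝 0) := by
    simpa using tendsto_star_sum_fst_mul_sum_fst_mul_sub (1 : ι → 𝓜(𝕜, A)) hf_bdd hf_central
      hf_orth a
  have hsum_bdd : IsBoundedUnder (· ≤ ·) l fun n => ‖∑ g, f g n‖ :=
    (isBoundedUnder_le_sum Finset.univ fun g _ => hf_bdd g).mono_le <|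
      .of_forall fun n => by simpa using norm_sum_le Finset.univ (f · n)
  have hunit : Tendsto (fun n => star (∑ g, f g n) * (∑ g, f g n) * a) l (𝓝 a) :=
    (IsAsymptoticallyCentral.sum fun g _ => hf_central g).tendsto_star_mul_self_mul
      hsum_bdd hf_sum a
  simpa using (hw.sub hs).add hunit

end RohlinSum

/-- The computation `w*w·a → a` from the proof of Lemma 3.4: if `{v_g}` are unitaries in the
multiplier algebra `M(A)` and `(f_{g,n})_n` are sequences of positive contractions in `A`
which are asymptotically central, asymptotically mutually orthogonal, asymptotically
idempotent, and asymptotically sum to a unit, then `w_n = Σ_g v_g·f_{g,n}` satisfies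
`lim_n ‖w_n* w_n a − a‖ = 0` for every `a ∈ A`. -/
theorem rohlin_sum_approximate_isometry
    {A : Type*} [NonUnitalCStarAlgebra A] [PartialOrder A] [StarOrderedRing A]
    {G : Type*} [Group G] [Fintype G]
    (v : G → 𝓜(ℂ, A)) (hv : ∀ g, v g ∈ unitary 𝓜(ℂ, A))
    (f : G → ℕ → A)
    (hf_pos : ∀ g n, 0 ≤ f g n)
    (hf_norm : ∀ g n, ‖f g n‖ ≤ 1)
    (hf_central : ∀ (a : A) (g : G),
      Tendsto (fun n => ‖f g n * a - a * f g n‖) atTop (𝓝 0))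
    (hf_orth : ∀ (a : A) (g h : G), g ≠ h →
      Tendsto (fun n => ‖f g n * f h n * a‖) atTop (𝓝 0))
    (hf_idem : ∀ (a : A) (g : G),
      Tendsto (fun n => ‖(f g n * f g n - f g n) * a‖) atTop (𝓝 0))
    (hf_sum : ∀ a : A,
      Tendsto (fun n => ‖(∑ k : G, f k n) * a - a‖) atTop (𝓝 0))
    (w : ℕ → A)
    (hw : ∀ n, w n = ∑ g : G, (v g).fst (f g n)) :
    ∀ a : A, Tendsto (fun n => ‖star (w n) * w n * a - a‖) atTop (𝓝 0) := by
  simp only [← tendsto_iff_norm_sub_tendsto_zero, ← tendsto_zero_iff_norm_tendsto_zero]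
    at hf_central hf_orth hf_sum ⊢
  have hf_star (g : G) (n : ℕ) : star (f g n) = f g n :=
    (IsSelfAdjoint.of_nonneg (hf_pos g n)).star_eq
  simpa only [hw] using rohlin_sum_approximate_isometry_general v
    (fun g => Unitary.star_mul_self_of_mem (hv g)) (fun g => isBoundedUnder_of ⟨1, hf_norm g⟩)
    (fun g a => hf_central a g) (by simpa only [hf_star] using hf_orth) hf_sum
end
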